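/- For the Weierstrass ℘-function with period lattice L_ω = ω·ℤ[τ] satisfying ℘′(z)² = 4℘(z)³ − 1, one has ℘′(√−3·ω/6, L_ω) = −3·√−1. -/

import Mathlib

noncomputable section

open Complex Real ComplexConjugate

/-- `τ = (−1+√−3)/2`, a primitive cube root of unity. -/
def tau : ℂ := (-1 + Real.sqrt 3 * Complex.I) / 2

/-- `√−3 = 1 + 2τ`, the square root of `−3` with positive imaginary part. -/
def sqrtm3 : ℂ := Real.sqrt 3 * Complex.I

/-- The ring of integers `O_K = ℤ[τ]` of `K = ℚ(√−3)`, as a subring of `ℂ`. -/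
def Eis : Subring ℂ := Subring.closure {tau}

/-- `τ` as an element of `ℤ[τ]`. -/
def tauO : Eis := ⟨tau, Subring.subset_closure rfl⟩

/-- `√−3` as an element of `ℤ[τ]`. -/
def sqrtm3O : Eis := 1 + 2 * tauO

/-- Membership in the lattice `L_ω = ω·ℤ[τ]`. -/
def inLattice (ω : ℝ) (z : ℂ) : Prop := ∃ a : Eis, z = (ω : ℂ) * a

/-- The Weierstrass `℘`-function of the lattice `L_ω = ω·ℤ[τ]`. -/
def wp (ω : ℝ) (z : ℂ) : ℂ :=
  1 / z ^ 2 + ∑' a : {w : ℂ // inLattice ω w ∧ w ≠ 0},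
    (1 / (z - (a : ℂ)) ^ 2 - 1 / (a : ℂ) ^ 2)

/-- The Weierstrass `ζ`-function of the lattice `L_ω = ω·ℤ[τ]`. -/
def wzeta (ω : ℝ) (z : ℂ) : ℂ :=
  1 / z + ∑' a : {w : ℂ // inLattice ω w ∧ w ≠ 0},
    (1 / (z - (a : ℂ)) + 1 / (a : ℂ) + z / (a : ℂ) ^ 2)

/-- The real cube root of 2, as a complex number. -/
def cbrt2 : ℂ := ((2 : ℝ) ^ ((1 : ℝ) / 3) : ℝ)

/-- The real cube root of 4, as a complex number. -/
def cbrt4 : ℂ := ((4 : ℝ) ^ ((1 : ℝ) / 3) : ℝ)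


open Set Filter Topology

lemma real_core (P Q : ℝ → ℝ) (h : ℝ) (hh : 0 < h)
    (hP : ∀ t ∈ Ioo 0 (2 * h), HasDerivAt P (Q t) t)
    (hQ : ∀ t ∈ Ioo 0 (2 * h), HasDerivAt Q (6 * P t ^ 2) t)
    (hsq : ∀ t ∈ Ioo 0 (2 * h), Q t ^ 2 = 4 * P t ^ 3 + 1)
    (_symP : ∀ t, P (2 * h - t) = P t) (symQ : ∀ t, Q (2 * h - t) = - Q t)
    (hlim : Tendsto P (𝓝[>] 0) atTop) (hz : P (2 * h / 3) = 0) : Q (h / 3) = -3 := by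
  have hQh : Q h = 0 := by
    have := symQ h
    rw [show 2 * h - h = h by ring] at this
    linarith
  obtain ⟨e, he⟩ : ∃ e, P h = e := ⟨_, rfl⟩
  have he3 : 4 * e ^ 3 = -1 := by
    have := hsq h ⟨by linarith, by linarith⟩
    rw [hQh, he] at this
    linarith
  have hene : e ≠ 0 := by rintro rfl; norm_num at he3
  have hQmono : MonotoneOn Q (Ioo 0 (2 * h)) := by
    apply monotoneOn_of_deriv_nonneg (convex_Ioo _ _)
    · exact fun t ht => (hQ t ht).continuousAt.continuousWithinAt
    · rw [interior_Ioo]; exact fun t ht => (hQ t ht).differentiableAt.differentiableWithinAt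
    · rw [interior_Ioo]; intro t ht; rw [(hQ t ht).deriv]; positivity
  have hQneg : ∀ t ∈ Ioo 0 h, Q t < 0 := by
    intro t ht
    have h1 : Q t ≤ 0 := by
      rw [← hQh]
      exact hQmono ⟨ht.1, by linarith [ht.2]⟩ ⟨hh, by linarith⟩ ht.2.le
    refine lt_of_le_of_ne h1 fun h0 => ?_
    -- Q vanishes on [t, h]
    have hev : Q =ᶠ[𝓝[<] h] fun _ => 0 := by
      filter_upwards [Ioo_mem_nhdsLT ht.2] with x hx
      apply le_antisymm
      · rw [← hQh]
        exact hQmono ⟨ht.1.trans hx.1, by linarith [hx.2]⟩ ⟨hh, by linarith⟩ hx.2.le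
      · rw [← h0]
        exact hQmono ⟨ht.1, by linarith [ht.2]⟩ ⟨ht.1.trans hx.1, by linarith [hx.2]⟩ hx.1.le
    have d1 : HasDerivWithinAt Q (6 * P h ^ 2) (Iio h) h :=
      (hQ h ⟨hh, by linarith⟩).hasDerivWithinAt
    have d2 : HasDerivWithinAt Q 0 (Iio h) h :=
      (hasDerivWithinAt_const h (Iio h) (0 : ℝ)).congr_of_eventuallyEq hev hQh
    have := (uniqueDiffWithinAt_Iio h).eq_deriv _ d1 d2
    rw [he] at this
    exact hene (by simpa using this)
  have hPanti : StrictAntiOn P (Ioc 0 h) := by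
    apply strictAntiOn_of_deriv_neg (convex_Ioc _ _)
    · exact fun t ht => (hP t ⟨ht.1, by linarith [ht.2]⟩).continuousAt.continuousWithinAt
    · rw [interior_Ioc]
      intro t ht
      rw [(hP t ⟨ht.1, by linarith [ht.2]⟩).deriv]
      exact hQneg t ht
  have hPgt : ∀ t ∈ Ioo 0 h, 0 < P t - e := by
    intro t ht
    have := hPanti ⟨ht.1, ht.2.le⟩ ⟨hh, le_rfl⟩ ht.2
    rw [he] at this
    linarith
  let T := 2 * h / 3
  have hTh : T < h := by simp only [T]; linarith
  have hT0 : 0 < T := by simp only [T]; linarith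
  let M : ℝ → ℝ := fun s => if s = 0 then e else e + 3 * e ^ 2 / (P s - e)
  let M' : ℝ → ℝ := fun s => if s = 0 then 0 else -(3 * e ^ 2) * Q s / (P s - e) ^ 2
  have hMd : ∀ t ∈ Ioo 0 h, HasDerivAt M (M' t) t := by
    intro t ht
    have hne := (hPgt t ht).ne'
    have h2 : HasDerivAt (fun s => e + 3 * e ^ 2 / (P s - e)) (M' t) t := by
      have := (((hasDerivAt_const t (3 * e ^ 2)).fun_div
        ((hP t ⟨ht.1, by linarith [ht.2]⟩).sub_const e) hne).const_add e)
      refine this.congr_deriv ?_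
      simp only [M', ht.1.ne', if_false]; ring
    apply h2.congr_of_eventuallyEq
    filter_upwards [Ioi_mem_nhds ht.1] with s hs
    simp [M, (ne_of_gt hs : s ≠ 0)]
  have hM'd : ∀ t ∈ Ioo 0 h, HasDerivAt M' (6 * M t ^ 2) t := by
    intro t ht
    have hne := (hPgt t ht).ne'
    have ht2 : t ∈ Ioo 0 (2 * h) := ⟨ht.1, by linarith [ht.2]⟩
    have h2 : HasDerivAt (fun s => -(3 * e ^ 2) * Q s / (P s - e) ^ 2) (6 * M t ^ 2) t := by
      have := ((hQ t ht2).const_mul (-(3 * e ^ 2))).fun_div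
        (((hP t ht2).sub_const e).fun_pow 2) (pow_ne_zero 2 hne)
      refine this.congr_deriv ?_
      simp only [M, ht.1.ne', if_false]
      have hs := hsq t ht2
      field_simp
      simp only [Nat.cast_ofNat]
      norm_num
      have h1 : Q t ^ 2 = 4 * P t ^ 3 - 4 * e ^ 3 := by linarith
      ring_nf
      rw [h1]
      ring
    apply h2.congr_of_eventuallyEq
    filter_upwards [Ioi_mem_nhds ht.1] with s hs
    simp [M', (ne_of_gt hs : s ≠ 0)]
  have hr : Tendsto (fun s => (P s - e)⁻¹) (𝓝[>] 0) (𝓝 0) :=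
    (tendsto_atTop_add_const_right _ (-e) hlim).inv_tendsto_atTop
  have hMlim : Tendsto M (𝓝[>] 0) (𝓝 (M 0)) := by
    have : Tendsto (fun s => e + 3 * e ^ 2 * (P s - e)⁻¹) (𝓝[>] 0) (𝓝 (e + 3 * e ^ 2 * 0)) :=
      (hr.const_mul _).const_add _
    rw [show M 0 = e + 3 * e ^ 2 * 0 by simp [M]]
    apply this.congr'
    filter_upwards [self_mem_nhdsWithin] with s hs
    simp [M, (ne_of_gt hs : s ≠ 0), div_eq_mul_inv]
  have hM'lim : Tendsto M' (𝓝[>] 0) (𝓝 (M' 0)) := by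
    have h0 : M' 0 = 0 := by simp [M']
    rw [h0]
    have : Tendsto (fun s => 36 * e ^ 4 * ((P s - e)⁻¹ + 3 * e * (P s - e)⁻¹ ^ 2
        + 3 * e ^ 2 * (P s - e)⁻¹ ^ 3)) (𝓝[>] 0)
        (𝓝 (36 * e ^ 4 * (0 + 3 * e * 0 ^ 2 + 3 * e ^ 2 * 0 ^ 3))) :=
      ((hr.add ((hr.pow 2).const_mul _)).add ((hr.pow 3).const_mul _)).const_mul _
    have h3 : Tendsto (fun s => M' s ^ 2) (𝓝[>] 0) (𝓝 0) := by
      simp only [ne_eq, OfNat.ofNat_ne_zero, not_false_eq_true, zero_pow, mul_zero, add_zero] at this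
      apply this.congr'
      filter_upwards [Ioo_mem_nhdsGT hh] with s hs
      have hne := (hPgt s hs).ne'
      have hs' := hsq s ⟨hs.1, by linarith [hs.2]⟩
      have h1 : Q s ^ 2 = 4 * P s ^ 3 - 4 * e ^ 3 := by linarith
      simp only [M', hs.1.ne', if_false]
      rw [div_pow, mul_pow, h1]
      field_simp
      ring
    have h4 := h3.sqrt
    simp only [Real.sqrt_sq_eq_abs, Real.sqrt_zero] at h4
    exact (tendsto_zero_iff_abs_tendsto_zero _).2 h4
  have hIoo : Ioo 0 h ∈ 𝓝[>] (0 : ℝ) := Ioo_mem_nhdsGT hh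
  have hMc0 : ContinuousWithinAt M (Ici 0) 0 := by
    rw [← continuousWithinAt_Ioi_iff_Ici]; exact hMlim
  have hM'c0 : ContinuousWithinAt M' (Ici 0) 0 := by
    rw [← continuousWithinAt_Ioi_iff_Ici]; exact hM'lim
  have hMr0 : HasDerivWithinAt M (M' 0) (Ici 0) 0 := by
    refine hasDerivWithinAt_Ici_of_tendsto_deriv (s := Ioo 0 h)
      (fun t ht => (hMd t ht).differentiableAt.differentiableWithinAt) ?_ hIoo ?_
    · exact hMlim.mono_left (nhdsWithin_mono _ fun x hx => hx.1)
    · apply hM'lim.congr'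
      filter_upwards [hIoo] with s hs using (hMd s hs).deriv.symm
  have hM'r0 : HasDerivWithinAt M' (6 * M 0 ^ 2) (Ici 0) 0 := by
    refine hasDerivWithinAt_Ici_of_tendsto_deriv (s := Ioo 0 h)
      (fun t ht => (hM'd t ht).differentiableAt.differentiableWithinAt) ?_ hIoo ?_
    · exact hM'lim.mono_left (nhdsWithin_mono _ fun x hx => hx.1)
    · apply ((hMlim.pow 2).const_mul 6).congr'
      filter_upwards [hIoo] with s hs using (hM'd s hs).deriv.symm
  let N : ℝ → ℝ := fun s => P (h + s)
  let N' : ℝ → ℝ := fun s => Q (h + s)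
  have hNd : ∀ t ∈ Ico 0 h, HasDerivAt N (N' t) t := fun t ht =>
    (hP (h + t) ⟨by linarith [ht.1], by linarith [ht.2]⟩).comp_const_add h t
  have hN'd : ∀ t ∈ Ico 0 h, HasDerivAt N' (6 * N t ^ 2) t := fun t ht =>
    (hQ (h + t) ⟨by linarith [ht.1], by linarith [ht.2]⟩).comp_const_add h t
  have hMc : ContinuousOn M (Icc 0 T) := by
    intro t ht
    rcases ht.1.eq_or_lt with rfl | h0
    · exact hMc0.mono fun x hx => hx.1
    · exact (hMd t ⟨h0, by linarith [ht.2]⟩).continuousAt.continuousWithinAt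
  have hM'c : ContinuousOn M' (Icc 0 T) := by
    intro t ht
    rcases ht.1.eq_or_lt with rfl | h0
    · exact hM'c0.mono fun x hx => hx.1
    · exact (hM'd t ⟨h0, by linarith [ht.2]⟩).continuousAt.continuousWithinAt
  have hNc : ContinuousOn N (Icc 0 T) := fun t ht =>
    (hNd t ⟨ht.1, by linarith [ht.2]⟩).continuousAt.continuousWithinAt
  have hN'c : ContinuousOn N' (Icc 0 T) := fun t ht =>
    (hN'd t ⟨ht.1, by linarith [ht.2]⟩).continuousAt.continuousWithinAt
  obtain ⟨C1, hC1⟩ := isCompact_Icc.exists_bound_of_continuousOn hMc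
  obtain ⟨C2, hC2⟩ := isCompact_Icc.exists_bound_of_continuousOn hNc
  let C := max C1 C2
  have hC0 : 0 ≤ C := (norm_nonneg _).trans ((hC1 0 ⟨le_rfl, hT0.le⟩).trans (le_max_left _ _))
  have key := ODE_solution_unique_of_mem_Icc_right (a := 0) (b := T)
    (v := fun _ x => ((x.2, 6 * x.1 ^ 2) : ℝ × ℝ)) (s := fun _ => {x : ℝ × ℝ | |x.1| ≤ C})
    (K := ⟨1 + 12 * C, by positivity⟩)
    (f := fun t => (M t, M' t)) (g := fun t => (N t, N' t))
    (by
      intro t _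
      apply LipschitzOnWith.of_dist_le_mul
      intro x hx y hy
      simp only [mem_ofPred_eq] at hx hy
      have h1 : dist x.1 y.1 ≤ dist x y := le_max_left _ _
      have h2 : dist x.2 y.2 ≤ dist x y := le_max_right _ _
      have h3 : 0 ≤ dist x y := dist_nonneg
      show max (dist x.2 y.2) (dist (6 * x.1 ^ 2) (6 * y.1 ^ 2)) ≤ (1 + 12 * C) * dist x y
      apply max_le
      · nlinarith [mul_nonneg hC0 h3]
      · rw [Real.dist_eq] at h1 ⊢
        rw [show 6 * x.1 ^ 2 - 6 * y.1 ^ 2 = 6 * ((x.1 + y.1) * (x.1 - y.1)) by ring, abs_mul,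
          abs_mul, abs_of_pos (by norm_num : (0 : ℝ) < 6)]
        have h4 : |x.1 + y.1| ≤ 2 * C := (abs_add_le _ _).trans (by linarith)
        have h5 : |x.1 + y.1| * |x.1 - y.1| ≤ 2 * C * dist x y :=
          mul_le_mul h4 h1 (abs_nonneg _) (by positivity)
        nlinarith)
    (hMc.prodMk hM'c)
    (by
      intro t ht
      rcases ht.1.eq_or_lt with rfl | h0
      · exact hMr0.prodMk hM'r0
      · have : t ∈ Ioo 0 h := ⟨h0, by linarith [ht.2]⟩
        exact (hMd t this).hasDerivWithinAt.prodMk (hM'd t this).hasDerivWithinAt)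
    (fun t ht => (hC1 t ⟨ht.1, ht.2.le⟩).trans (le_max_left _ _))
    (hNc.prodMk hN'c)
    (by
      intro t ht
      have : t ∈ Ico 0 h := ⟨ht.1, by linarith [ht.2]⟩
      exact (hNd t this).hasDerivWithinAt.prodMk (hN'd t this).hasDerivWithinAt)
    (fun t ht => (hC2 t ⟨ht.1, ht.2.le⟩).trans (le_max_right _ _))
    (by simp [M, M', N, N', he, hQh])
  have kT := key (right_mem_Icc.2 hT0.le)
  have k2 : M' T = N' T := congrArg Prod.snd kT
  have k3 : N' T = - Q (h / 3) := by
    rw [← symQ]; simp only [N', T]; congr 1; ring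
  have k4 : M' T = -3 * Q T := by
    simp only [M', hT0.ne', if_false]
    rw [show P T = 0 from hz]
    field_simp
    ring
  have k5 : Q T ^ 2 = 1 := by
    rw [hsq T ⟨hT0, by linarith⟩, show P T = 0 from hz]; norm_num
  have k6 := hQneg T ⟨hT0, hTh⟩
  have k7 : Q T = -1 := by nlinarith
  rw [k3] at k2
  rw [k7] at k4
  linarith

lemma tau_sq : tau ^ 2 = -1 - tau := by
  have h3 : ((Real.sqrt 3 : ℝ) : ℂ) ^ 2 = 3 := by
    rw [← Complex.ofReal_pow, Real.sq_sqrt (by norm_num)]; norm_num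
  unfold tau
  linear_combination (1 / 4) * h3 * I ^ 2 + (3 / 4) * Complex.I_sq

lemma sqrtm3_eq : sqrtm3 = 1 + 2 * tau := by
  unfold sqrtm3 tau; ring

lemma tau_im : tau.im = Real.sqrt 3 / 2 := by
  simp [tau]

lemma tau_re : tau.re = -1 / 2 := by
  simp [tau]

lemma mem_Eis (z : ℂ) : z ∈ Eis ↔ ∃ m n : ℤ, z = m + n * tau := by
  constructor
  · intro hz
    unfold Eis at hz
    induction hz using Subring.closure_induction with
    | mem x hx => exact ⟨0, 1, by simpa using hx⟩
    | zero => exact ⟨0, 0, by simp⟩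
    | one => exact ⟨1, 0, by simp⟩
    | add x y _ _ hx hy =>
      obtain ⟨a, b, rfl⟩ := hx
      obtain ⟨c, d, rfl⟩ := hy
      exact ⟨a + c, b + d, by push_cast; ring⟩
    | neg x _ hx =>
      obtain ⟨a, b, rfl⟩ := hx
      exact ⟨-a, -b, by push_cast; ring⟩
    | mul x y _ _ hx hy =>
      obtain ⟨a, b, rfl⟩ := hx
      obtain ⟨c, d, rfl⟩ := hy
      refine ⟨a * c - b * d, a * d + b * c - b * d, ?_⟩
      push_cast
      linear_combination (b * d : ℂ) * tau_sq
  · rintro ⟨m, n, rfl⟩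
    exact add_mem (intCast_mem _ _) (mul_mem (intCast_mem _ _) (Subring.subset_closure rfl))

/-- The period pair `(ω, ωτ)`. -/
def LL (ω : ℝ) (hω : 0 < ω) : PeriodPair where
  ω₁ := ω
  ω₂ := ω * tau
  indep := by
    rw [LinearIndependent.pair_iff]
    intro s t h
    have h3 : (0 : ℝ) < Real.sqrt 3 := by positivity
    have him := congrArg Complex.im h
    have hre := congrArg Complex.re h
    simp [tau_im, tau_re] at him hre
    have ht : t = 0 := by
      exact him.resolve_right hω.ne'
    subst ht
    simp [hω.ne'] at hre
    exact ⟨hre, rfl⟩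

lemma mem_LL (ω : ℝ) (hω : 0 < ω) (z : ℂ) :
    z ∈ (LL ω hω).lattice ↔ ∃ m n : ℤ, z = ω * (m + n * tau) := by
  rw [PeriodPair.mem_lattice]
  apply exists_congr; intro m; apply exists_congr; intro n
  simp only [LL]
  constructor
  · rintro rfl; ring
  · rintro rfl; ring

lemma inLattice_iff (ω : ℝ) (hω : 0 < ω) (z : ℂ) :
    inLattice ω z ↔ z ∈ (LL ω hω).lattice := by
  rw [mem_LL]
  constructor
  · rintro ⟨⟨a, ha⟩, rfl⟩
    obtain ⟨m, n, rfl⟩ := (mem_Eis a).1 ha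
    exact ⟨m, n, rfl⟩
  · rintro ⟨m, n, rfl⟩
    exact ⟨⟨_, (mem_Eis _).2 ⟨m, n, rfl⟩⟩, rfl⟩

lemma wp_eq (ω : ℝ) (hω : 0 < ω) : wp ω = (LL ω hω).weierstrassP := by
  ext z
  have h := (LL ω hω).weierstrassPExcept_add 0 z
  rw [← h, wp, PeriodPair.weierstrassPExcept]
  have hi : Function.Injective (fun a : {w : ℂ // inLattice ω w ∧ w ≠ 0} =>
      (⟨a.1, (inLattice_iff ω hω _).1 a.2.1⟩ : (LL ω hω).lattice)) := by
    intro a b hab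
    simpa [Subtype.ext_iff] using hab
  have h2 := hi.tsum_eq (f := fun l : (LL ω hω).lattice =>
    if (l : ℂ) = ((0 : (LL ω hω).lattice) : ℂ) then (0 : ℂ) else (1 / (z - l) ^ 2 - 1 / (l : ℂ) ^ 2)) (by
      intro l hl
      have h0 : (l : ℂ) ≠ 0 := by
        intro h0
        exact hl (if_pos h0)
      exact ⟨⟨l, (inLattice_iff ω hω _).2 l.2, h0⟩, rfl⟩)
  rw [← h2]
  rw [add_comm]
  congr 1
  · apply tsum_congr
    intro a
    have := a.2.2
    simp [this]
  · simp

lemma conj_tau : conj tau = -1 - tau := by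
  apply Complex.ext
  · simp [tau_re]; norm_num
  · simp [tau_im]

lemma conj_mem (ω : ℝ) (hω : 0 < ω) (z : ℂ) (hz : z ∈ (LL ω hω).lattice) :
    conj z ∈ (LL ω hω).lattice := by
  rw [mem_LL] at hz ⊢
  obtain ⟨m, n, rfl⟩ := hz
  refine ⟨m - n, -n, ?_⟩
  simp only [map_mul, map_add, Complex.conj_ofReal, map_intCast, conj_tau]
  push_cast; ring

/-- Conjugation on the lattice. -/
def conjEquiv (ω : ℝ) (hω : 0 < ω) : (LL ω hω).lattice ≃ (LL ω hω).lattice where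
  toFun l := ⟨conj l.1, conj_mem ω hω _ l.2⟩
  invFun l := ⟨conj l.1, conj_mem ω hω _ l.2⟩
  left_inv l := by simp
  right_inv l := by simp

lemma wp_conj (ω : ℝ) (hω : 0 < ω) (z : ℂ) :
    (LL ω hω).weierstrassP (conj z) = conj ((LL ω hω).weierstrassP z) := by
  simp only [PeriodPair.weierstrassP]
  rw [Complex.conj_tsum, ← (conjEquiv ω hω).tsum_eq]
  apply tsum_congr
  intro l
  simp [conjEquiv]

lemma wp'_conj (ω : ℝ) (hω : 0 < ω) (z : ℂ) :
    (LL ω hω).derivWeierstrassP (conj z) = conj ((LL ω hω).derivWeierstrassP z) := by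
  simp only [PeriodPair.derivWeierstrassP]
  rw [map_neg, Complex.conj_tsum, ← (conjEquiv ω hω).tsum_eq]
  congr 1
  apply tsum_congr
  intro l
  simp [conjEquiv, Complex.conj_ofNat]

lemma tau_mul_mem (ω : ℝ) (hω : 0 < ω) (z : ℂ) (hz : z ∈ (LL ω hω).lattice) :
    tau * z ∈ (LL ω hω).lattice := by
  rw [mem_LL] at hz ⊢
  obtain ⟨m, n, rfl⟩ := hz
  refine ⟨-n, m - n, ?_⟩
  push_cast
  linear_combination (ω * n : ℂ) * tau_sq

lemma tau_cube : tau ^ 3 = 1 := by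
  linear_combination (tau - 1) * tau_sq

/-- Multiplication by `τ` on the lattice. -/
def tauEquiv (ω : ℝ) (hω : 0 < ω) : (LL ω hω).lattice ≃ (LL ω hω).lattice where
  toFun l := ⟨tau * l.1, tau_mul_mem ω hω _ l.2⟩
  invFun l := ⟨tau * (tau * l.1), tau_mul_mem ω hω _ (tau_mul_mem ω hω _ l.2)⟩
  left_inv l := by
    ext; simp only; linear_combination (l.1) * tau_cube
  right_inv l := by
    ext; simp only; linear_combination (l.1) * tau_cube

lemma wp_tau (ω : ℝ) (hω : 0 < ω) (z : ℂ) :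
    (LL ω hω).weierstrassP (tau * z) = tau * ((LL ω hω).weierstrassP z) := by
  simp only [PeriodPair.weierstrassP]
  rw [← tsum_mul_left, ← (tauEquiv ω hω).tsum_eq]
  apply tsum_congr
  intro l
  have h0 : tau ≠ 0 := by
    intro h; have := tau_cube; simp [h] at this
  have h1 : (tau ^ 2)⁻¹ = tau := by
    rw [inv_eq_iff_eq_inv]
    refine eq_inv_of_mul_eq_one_left ?_
    linear_combination tau_cube
  simp only [tauEquiv, Equiv.coe_fn_mk]
  rw [← mul_sub, mul_pow, mul_pow, one_div, one_div, mul_inv, mul_inv, h1]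
  ring

lemma wp_z1 (ω : ℝ) (hω : 0 < ω) : (LL ω hω).weierstrassP (sqrtm3 * ω / 3) = 0 := by
  have hm : (ω : ℂ) * (((-1 : ℤ) : ℂ) + ((-1 : ℤ) : ℂ) * tau) ∈ (LL ω hω).lattice :=
    (mem_LL ω hω _).2 ⟨-1, -1, rfl⟩
  have h1 := (LL ω hω).weierstrassP_add_coe (sqrtm3 * ω / 3) ⟨_, hm⟩
  have h2 := wp_tau ω hω (sqrtm3 * ω / 3)
  have h3 : tau * (sqrtm3 * ω / 3) = sqrtm3 * ω / 3 + ω * (((-1 : ℤ) : ℂ) + ((-1 : ℤ) : ℂ) * tau) := by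
    rw [sqrtm3_eq]
    push_cast
    linear_combination (2 / 3 * ω : ℂ) * tau_sq
  rw [h3] at h2
  simp only at h1
  rw [h1] at h2
  have h4 : (tau - 1) * (LL ω hω).weierstrassP (sqrtm3 * ω / 3) = 0 := by
    linear_combination -h2
  rcases mul_eq_zero.1 h4 with h | h
  · exfalso
    have := congrArg Complex.re h
    simp [tau_re] at this
    norm_num at this
  · exact h

lemma wp_imag_lim (ω : ℝ) (hω : 0 < ω) :
    Tendsto (fun t : ℝ => -((LL ω hω).weierstrassP (I * t)).re) (𝓝[>] 0) atTop := by
  set L := LL ω hω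
  have hc : Tendsto (fun t : ℝ => -(L.weierstrassPExcept 0 (I * t)).re) (𝓝[>] 0)
      (𝓝 (-(L.weierstrassPExcept 0 (I * (0 : ℝ))).re)) := by
    have h1 : ContinuousAt (L.weierstrassPExcept 0) (I * (0 : ℝ)) := by
      have := (L.analyticAt_weierstrassPExcept 0).continuousAt
      simpa using this
    have h2 : ContinuousAt (fun t : ℝ => -(L.weierstrassPExcept 0 (I * t)).re) 0 := by
      refine ContinuousAt.neg (Complex.continuous_re.continuousAt.comp
        (ContinuousAt.comp (f := fun t : ℝ => I * (t : ℂ)) h1 (by fun_prop)))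
    exact h2.tendsto.mono_left nhdsWithin_le_nhds
  have h3 : Tendsto (fun t : ℝ => (t ^ 2)⁻¹) (𝓝[>] 0) atTop := by
    have := (tendsto_pow_atTop (α := ℝ) (two_ne_zero)).comp (tendsto_inv_nhdsGT_zero (𝕜 := ℝ))
    refine this.congr fun t => by simp
  refine (hc.add_atTop h3).congr fun t => ?_
  have h := L.weierstrassPExcept_add 0 (I * t)
  rw [← h]
  have : ((1 : ℂ) / (I * t - ((0 : L.lattice) : ℂ)) ^ 2 - 1 / ((0 : L.lattice) : ℂ) ^ 2)
      = ((-(t ^ 2)⁻¹ : ℝ) : ℂ) := by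
    simp [mul_pow]
  rw [this]
  simp only [Complex.add_re, Complex.ofReal_re, ZeroMemClass.coe_zero]
  ring

lemma wp_second (ω : ℝ) (hω : 0 < ω)
    (hODE : ∀ z ∉ (LL ω hω).lattice,
      (LL ω hω).derivWeierstrassP z ^ 2 = 4 * (LL ω hω).weierstrassP z ^ 3 - 1)
    (hax : ∀ᶠ t : ℝ in 𝓝[>] 0, I * (t : ℂ) ∉ (LL ω hω).lattice) :
    ∀ z ∉ (LL ω hω).lattice, HasDerivAt (LL ω hω).derivWeierstrassP
      (6 * (LL ω hω).weierstrassP z ^ 2) z := by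
  have hlim := wp_imag_lim ω hω
  set L := LL ω hω
  have hopen : IsOpen ((L.lattice : Set ℂ)ᶜ) := L.isClosed_lattice.isOpen_compl
  have hpre : IsPreconnected ((L.lattice : Set ℂ)ᶜ) :=
    (Set.Countable.isConnected_compl_of_one_lt_rank (by simp)
      (countable_of_Lindelof_of_discrete (X := L.lattice))).2
  have hd : ∀ z ∉ L.lattice, HasDerivAt L.weierstrassP (L.derivWeierstrassP z) z := by
    intro z hz
    rw [← L.deriv_weierstrassP]
    exact (L.differentiableOn_weierstrassP.differentiableAt (hopen.mem_nhds hz)).hasDerivAt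
  have hd' : ∀ z ∉ L.lattice, HasDerivAt L.derivWeierstrassP (deriv L.derivWeierstrassP z) z := by
    intro z hz
    exact (L.differentiableOn_derivWeierstrassP.differentiableAt (hopen.mem_nhds hz)).hasDerivAt
  have hprod : ∀ z ∈ (L.lattice : Set ℂ)ᶜ, L.derivWeierstrassP z *
      (deriv L.derivWeierstrassP z - 6 * L.weierstrassP z ^ 2) = 0 := by
    intro z hz
    have e1 := (hd' z hz).fun_pow 2
    have e2 := (((hd z hz).fun_pow 3).const_mul 4).sub_const 1
    have e3 := e2.congr_of_eventuallyEq
      (f₁ := fun z => L.derivWeierstrassP z ^ 2) (by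
        filter_upwards [hopen.mem_nhds hz] with w hw using hODE w hw)
    have e4 := e1.unique e3
    norm_num at e4
    linear_combination e4 / 2
  have ha : AnalyticOnNhd ℂ L.derivWeierstrassP ((L.lattice : Set ℂ)ᶜ) :=
    L.analyticOnNhd_derivWeierstrassP
  have hb : AnalyticOnNhd ℂ (fun z => deriv L.derivWeierstrassP z - 6 * L.weierstrassP z ^ 2)
      ((L.lattice : Set ℂ)ᶜ) :=
    fun z hz => ((ha z hz).deriv).fun_sub
      (analyticAt_const.fun_mul ((L.analyticOnNhd_weierstrassP z hz).fun_pow 2))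
  rcases AnalyticOnNhd.eq_zero_or_eq_zero_of_mul_eq_zero ha hb hprod hpre with h | h
  · exfalso
    have hev := (hlim.eventually_gt_atTop 1).and hax
    obtain ⟨t, ht, htm⟩ := hev.exists
    have h1 := hODE _ htm
    rw [h _ htm] at h1
    have h2 : ‖L.weierstrassP (I * t)‖ ^ 3 = 1 / 4 := by
      rw [← norm_pow]
      have : L.weierstrassP (I * t) ^ 3 = 1 / 4 := by linear_combination -h1 / 4
      rw [this]; norm_num
    have h3 : 1 < ‖L.weierstrassP (I * t)‖ := by
      have := (neg_le_abs _).trans (Complex.abs_re_le_norm (L.weierstrassP (I * t)))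
      linarith
    have h4 := one_lt_pow₀ h3 (three_ne_zero)
    linarith
  · intro z hz
    have := h z hz
    rw [← sub_eq_zero.1 this]
    exact hd' z hz

lemma axis_notMem (ω : ℝ) (hω : 0 < ω) (t : ℝ) (ht : t ∈ Ioo 0 (Real.sqrt 3 * ω)) :
    I * (t : ℂ) ∉ (LL ω hω).lattice := by
  rw [mem_LL]
  rintro ⟨m, n, h⟩
  have hre := congrArg Complex.re h
  have him := congrArg Complex.im h
  simp [tau_re, tau_im] at hre him
  have hs : (0 : ℝ) < Real.sqrt 3 := by positivity
  have h1 : (2 * m : ℝ) = n := by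
    rcases hre with h | h
    · exact absurd h hω.ne'
    · linarith
  have h2 : t = (Real.sqrt 3 * ω) * m := by rw [him, ← h1]; ring
  have hp : 0 < Real.sqrt 3 * ω := by positivity
  rw [h2] at ht
  have h3 : (0 : ℝ) < m := pos_of_mul_pos_right ht.1 hp.le
  have h4 : (m : ℝ) < 1 := by
    have := ht.2
    nlinarith
  norm_cast at h3 h4
  omega

/-- From [Qiu], (2.15): `℘′(√−3·ω/6) = −3√−1`, with `√−3 = 1 + 2τ` the square root of `−3` with positive imaginary part.
Here `ω > 0` is pinned down by the differential equation `℘′² = 4℘³ − 1` for the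
lattice `L_ω = ω·ℤ[τ]` (equivalently, the lattice invariants are `g₂ = 0`, `g₃ = 1`). -/
theorem wp_deriv_value_at_sqrt_point
    (ω : ℝ) (hω : 0 < ω)
    (hODE : ∀ z : ℂ, ¬ inLattice ω z → deriv (wp ω) z ^ 2 = 4 * wp ω z ^ 3 - 1) :
    deriv (wp ω) (sqrtm3 * (ω : ℂ) / 6) = -3 * Complex.I := by
  rw [wp_eq ω hω, PeriodPair.deriv_weierstrassP] at *
  have hODE' : ∀ z ∉ (LL ω hω).lattice,
      (LL ω hω).derivWeierstrassP z ^ 2 = 4 * (LL ω hω).weierstrassP z ^ 3 - 1 := by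
    intro z hz
    exact hODE z (by rwa [inLattice_iff ω hω])
  have hs : (0 : ℝ) < Real.sqrt 3 * ω := by positivity
  have hsec := wp_second ω hω hODE' (by
    filter_upwards [Ioo_mem_nhdsGT hs] with t ht using axis_notMem ω hω t ht)
  have hlim := wp_imag_lim ω hω
  have hnm := axis_notMem ω hω
  have hz1 := wp_z1 ω hω
  have hconj := wp_conj ω hω
  have hconj' := wp'_conj ω hω
  have hper : (I * ((Real.sqrt 3 * ω : ℝ) : ℂ)) ∈ (LL ω hω).lattice := by
    rw [mem_LL]
    refine ⟨1, 2, ?_⟩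
    have := sqrtm3_eq
    unfold sqrtm3 at this
    push_cast
    linear_combination ω * this
  set L := LL ω hω
  have hopen : IsOpen ((L.lattice : Set ℂ)ᶜ) := L.isClosed_lattice.isOpen_compl
  have hd : ∀ z ∉ L.lattice, HasDerivAt L.weierstrassP (L.derivWeierstrassP z) z := by
    intro z hz
    rw [← L.deriv_weierstrassP]
    exact (L.differentiableOn_weierstrassP.differentiableAt (hopen.mem_nhds hz)).hasDerivAt
  have hcI : ∀ t : ℝ, conj (I * (t : ℂ)) = -(I * t) := by
    intro t; simp
  have hPim : ∀ t : ℝ, (L.weierstrassP (I * t)).im = 0 := by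
    intro t
    have := hconj (I * t)
    rw [hcI, L.weierstrassP_neg] at this
    exact Complex.conj_eq_iff_im.1 this.symm
  have hQre : ∀ t : ℝ, (L.derivWeierstrassP (I * t)).re = 0 := by
    intro t
    have := congrArg Complex.re (hconj' (I * t))
    rw [hcI, L.derivWeierstrassP_neg] at this
    simp at this
    linarith
  let P : ℝ → ℝ := fun t => -(L.weierstrassP (I * t)).re
  let Q : ℝ → ℝ := fun t => (L.derivWeierstrassP (I * t)).im
  have hPc : ∀ t : ℝ, L.weierstrassP (I * t) = -(P t : ℂ) := by
    intro t; apply Complex.ext <;> simp [P, hPim]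
  have hQc : ∀ t : ℝ, L.derivWeierstrassP (I * t) = I * (Q t : ℂ) := by
    intro t; apply Complex.ext <;> simp [Q, hQre]
  have hlin : ∀ t : ℝ, HasDerivAt (fun s : ℝ => I * (s : ℂ)) I t := by
    intro t
    simpa using (Complex.ofRealCLM.hasDerivAt (x := t)).const_mul I
  have core := real_core P Q (Real.sqrt 3 * ω / 2) (by positivity)
    (by
      intro t ht
      have hm := hnm t (by rwa [mul_div_cancel₀ _ two_ne_zero] at ht)
      have h1 := ((hd _ hm).comp t (hlin t)).neg
      have h2 := (Complex.reCLM.hasFDerivAt.comp_hasDerivAt t h1)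
      refine (h2.congr_deriv ?_).congr_of_eventuallyEq (.of_forall fun s => ?_)
      · simp [hQc]
      · simp [P])
    (by
      intro t ht
      have hm := hnm t (by rwa [mul_div_cancel₀ _ two_ne_zero] at ht)
      have h1 := ((hsec _ hm).comp t (hlin t))
      have h2 := (Complex.imCLM.hasFDerivAt.comp_hasDerivAt t h1)
      refine (h2.congr_deriv ?_).congr_of_eventuallyEq (.of_forall fun s => ?_)
      · rw [hPc]
        have : (6 * (-(P t : ℂ)) ^ 2 * I) = ((6 * P t ^ 2 : ℝ) : ℂ) * I := by push_cast; ring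
        rw [this]
        simp only [Complex.imCLM_apply, Complex.im_ofReal_mul]
        simp
      · simp [Q])
    (by
      intro t ht
      have hm := hnm t (by rwa [mul_div_cancel₀ _ two_ne_zero] at ht)
      have h1 := hODE' _ hm
      rw [hPc, hQc] at h1
      have h2 : ((Q t ^ 2 : ℝ) : ℂ) = ((4 * P t ^ 3 + 1 : ℝ) : ℂ) := by
        push_cast
        linear_combination -h1 + (Q t : ℂ) ^ 2 * Complex.I_sq
      exact_mod_cast h2)
    (by
      intro t
      have h1 : (I * ((2 * (Real.sqrt 3 * ω / 2) - t : ℝ) : ℂ)) =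
          -(I * t) + I * ((Real.sqrt 3 * ω : ℝ) : ℂ) := by push_cast; ring
      simp only [P]
      rw [h1, L.weierstrassP_add_coe _ ⟨_, hper⟩, L.weierstrassP_neg])
    (by
      intro t
      have h1 : (I * ((2 * (Real.sqrt 3 * ω / 2) - t : ℝ) : ℂ)) =
          -(I * t) + I * ((Real.sqrt 3 * ω : ℝ) : ℂ) := by push_cast; ring
      simp only [Q]
      rw [h1, L.derivWeierstrassP_add_coe _ ⟨_, hper⟩, L.derivWeierstrassP_neg]
      simp)
    hlim
    (by
      have h1 : (I * ((2 * (Real.sqrt 3 * ω / 2) / 3 : ℝ) : ℂ)) = sqrtm3 * ω / 3 := by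
        unfold sqrtm3; push_cast; ring
      simp only [P]
      rw [h1, hz1]; simp)
  have hz0 : sqrtm3 * (ω : ℂ) / 6 = I * ((Real.sqrt 3 * ω / 2 / 3 : ℝ) : ℂ) := by
    unfold sqrtm3; push_cast; ring
  rw [hz0, hQc, core]
  push_cast; ring
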